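/- arXiv:1906.00135 — 3 statements merged into one kernel-verified Lean document; each statement's English description precedes it below -/
import Mathlib

section
/- For all integers m and n with n ≥ m ≥ 2, the 1/2-domination number of the Cartesian product of the path on m vertices with the path on n vertices is at least the product of the 1/2-domination numbers of the two paths: γ_{1/2}(P_m □ P_n) ≥ γ_{1/2}(P_m) · γ_{1/2}(P_n). -/
open SimpleGraph

/-- The closed neighborhood `N[S]` of a set of vertices `S`:
all vertices equal or adjacent to some vertex of `S`. -/
def closedNbhd {V : Type*} (G : SimpleGraph V) (S : Set V) : Set V :=
  {w | ∃ u ∈ S, w = u ∨ G.Adj u w}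

/-- `S` is a `p`-dominating set of `G` if `N[S]` contains at least a proportion `p`
of the vertices. -/
def IsPDomSet {V : Type*} [Fintype V] (G : SimpleGraph V) (p : ℝ) (S : Set V) : Prop :=
  p * (Fintype.card V : ℝ) ≤ ((closedNbhd G S).ncard : ℝ)

/-- The `p`-domination number `γ_p(G)`: the minimum cardinality of a `p`-dominating set. -/
noncomputable def pDomNum {V : Type*} [Fintype V] (G : SimpleGraph V) (p : ℝ) : ℕ :=
  sInf {k : ℕ | ∃ S : Set V, IsPDomSet G p S ∧ S.ncard = k}

/-!
A closed neighborhood in a graph of maximum degree at most `d` has at most `d + 1` vertices, so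
`γ_p(G) ≥ ⌈p|V| / (d + 1)⌉`; for the grid, `γ_p(P_m □ P_n) ≥ ⌈pmn/5⌉`. On a path, every third vertex
starting from the second one dominates an initial segment, so `γ_p(P_n) ≤ ⌈pn/3⌉`. What remains is
`⌈pm/3⌉⌈pn/3⌉ ≤ ⌈pmn/5⌉`, which is where `p ≤ 3/4` enters: it gives `m > 4 (⌈pm/3⌉ - 1)`, so that
`⌈pm/3⌉ ≥ 2` forces `m ≥ 5`. For `p` slightly larger than `3/4` the inequality fails at `m = n = 4`.
-/

section PDomination

variable {V : Type*} {G : SimpleGraph V}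

lemma subset_closedNbhd (S : Set V) : S ⊆ closedNbhd G S :=
  fun u hu ↦ ⟨u, hu, Or.inl rfl⟩

lemma closedNbhd_eq_biUnion (S : Set V) :
    closedNbhd G S = ⋃ u ∈ S, insert u (G.neighborSet u) := by
  ext w
  simp [closedNbhd]

lemma ncard_closedNbhd_le [G.LocallyFinite] {d : ℕ} (hd : ∀ v, G.degree v ≤ d) {S : Set V}
    (hS : S.Finite) : (closedNbhd G S).ncard ≤ (d + 1) * S.ncard := by
  lift S to Finset V using hS
  have ncard_insert_le (u : V) : (insert u (G.neighborSet u)).ncard ≤ d + 1 := by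
    grw [Set.ncard_insert_le, Set.ncard_eq_toFinset_card', ← neighborFinset_def,
      card_neighborFinset_eq_degree, hd]
  calc (closedNbhd G S).ncard
      ≤ ∑ u ∈ S, (insert u (G.neighborSet u)).ncard := by
        rw [closedNbhd_eq_biUnion]
        exact S.set_ncard_biUnion_le _
    _ ≤ ∑ _u ∈ S, (d + 1) := Finset.sum_le_sum fun u _ ↦ ncard_insert_le u
    _ = (d + 1) * (S : Set V).ncard := by
        rw [Finset.sum_const, Set.ncard_coe_finset, smul_eq_mul, mul_comm]

variable [Fintype V] {p : ℝ}

lemma pDomNum_le_ncard {S : Set V} (hS : IsPDomSet G p S) : pDomNum G p ≤ S.ncard :=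
  Nat.sInf_le ⟨S, hS, rfl⟩

lemma isPDomSet_univ (hp : p ≤ 1) : IsPDomSet G p Set.univ := by
  rw [IsPDomSet, Set.univ_subset_iff.mp (subset_closedNbhd _), Set.ncard_univ,
    Nat.card_eq_fintype_card]
  exact mul_le_of_le_one_left (Nat.cast_nonneg _) hp

lemma exists_isPDomSet_ncard_eq_pDomNum (hp : p ≤ 1) :
    ∃ S : Set V, IsPDomSet G p S ∧ S.ncard = pDomNum G p :=
  Nat.sInf_mem (s := {k | ∃ S : Set V, IsPDomSet G p S ∧ S.ncard = k})
    ⟨_, Set.univ, isPDomSet_univ hp, rfl⟩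

lemma ceil_mul_card_div_le_pDomNum [G.LocallyFinite] {d : ℕ} (hd : ∀ v, G.degree v ≤ d)
    (hp : p ≤ 1) : ⌈p * Fintype.card V / (d + 1)⌉₊ ≤ pDomNum G p := by
  obtain ⟨S, hS, hcard⟩ := exists_isPDomSet_ncard_eq_pDomNum (G := G) hp
  rw [← hcard, Nat.ceil_le, div_le_iff₀' (by positivity)]
  calc p * Fintype.card V ≤ (closedNbhd G S).ncard := hS
    _ ≤ (d + 1) * S.ncard := mod_cast ncard_closedNbhd_le hd S.toFinite

end PDomination

section PathGraph

lemma degree_pathGraph_le_two {n : ℕ} (v : Fin n) [Fintype ((pathGraph n).neighborSet v)] :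
    (pathGraph n).degree v ≤ 2 := by
  have hsub : ((pathGraph n).neighborFinset v).map Fin.valEmbedding ⊆ {v.val - 1, v.val + 1} := by
    intro i
    simp only [Finset.mem_map, mem_neighborFinset, pathGraph_adj, Fin.valEmbedding_apply,
      Finset.mem_insert, Finset.mem_singleton]
    rintro ⟨w, hw, rfl⟩
    omega
  calc (pathGraph n).degree v = (((pathGraph n).neighborFinset v).map Fin.valEmbedding).card := by
        rw [Finset.card_map, card_neighborFinset_eq_degree]
    _ ≤ 2 := (Finset.card_le_card hsub).trans Finset.card_le_two

lemma degree_pathGraph_boxProd_pathGraph_le_four {m n : ℕ} (v : Fin m × Fin n)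
    [Fintype ((pathGraph m □ pathGraph n).neighborSet v)] :
    (pathGraph m □ pathGraph n).degree v ≤ 4 := by
  classical
  rw [degree_boxProd]
  exact add_le_add (degree_pathGraph_le_two v.1) (degree_pathGraph_le_two v.2)

lemma exists_ncard_le_and_min_le_ncard_closedNbhd_pathGraph (n k : ℕ) :
    ∃ S : Set (Fin n), S.ncard ≤ k ∧ min n (3 * k) ≤ (closedNbhd (pathGraph n) S).ncard := by
  obtain _ | n := n
  · exact ⟨∅, by simp, by simp⟩
  -- Clamped because the last block of three may have only one vertex in the path.
  let center (i : ℕ) : Fin (n + 1) := Fin.clamp (3 * i + 1) n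
  let S : Finset (Fin (n + 1)) := (Finset.range k).image center
  have hdom : {v : Fin (n + 1) | v.val < 3 * k} ⊆ closedNbhd (pathGraph (n + 1)) S := by
    intro v hv
    have hlt : v.val / 3 < k := Nat.div_lt_of_lt_mul hv
    refine ⟨center (v / 3), by simpa [S] using ⟨_, hlt, rfl⟩, ?_⟩
    simp only [center, pathGraph_adj, Fin.ext_iff, Fin.coe_clamp]
    omega
  refine ⟨S, ?_, ?_⟩
  · simpa [Set.ncard_coe_finset] using Finset.card_image_le (s := Finset.range k) (f := center)
  · calc min (n + 1) (3 * k) = {v : Fin (n + 1) | v.val < 3 * k}.ncard := by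
          rw [Set.ncard_eq_toFinset_card', Set.toFinset_ofPred, Fin.card_filter_val_lt]
      _ ≤ _ := Set.ncard_le_ncard hdom (Set.toFinite _)

lemma pDomNum_pathGraph_le {p : ℝ} (hp : p ≤ 1) (n : ℕ) :
    pDomNum (pathGraph n) p ≤ ⌈p * n / 3⌉₊ := by
  obtain ⟨S, hcard, hdom⟩ := exists_ncard_le_and_min_le_ncard_closedNbhd_pathGraph n ⌈p * n / 3⌉₊
  refine (pDomNum_le_ncard ?_).trans hcard
  have hle_n : p * n ≤ n := mul_le_of_le_one_left (Nat.cast_nonneg _) hp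
  have hle_ceil : p * n ≤ 3 * ⌈p * n / 3⌉₊ := (div_le_iff₀' (by norm_num)).mp (Nat.le_ceil _)
  calc p * Fintype.card (Fin n) = p * n := by rw [Fintype.card_fin]
    _ ≤ (min n (3 * ⌈p * n / 3⌉₊) : ℕ) := by
        push_cast
        exact le_min hle_n hle_ceil
    _ ≤ (closedNbhd (pathGraph n) S).ncard := mod_cast hdom

end PathGraph

section Ceil

variable {p : ℝ} {m n : ℕ}

lemma ceil_div_three_le_ceil_mul_div_five (hp : 0 ≤ p) (hm : 2 ≤ m) :
    ⌈p * n / 3⌉₊ ≤ ⌈p * (m * n) / 5⌉₊ := by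
  have hm' : (2 : ℝ) ≤ m := mod_cast hm
  have h : p * n * 2 ≤ p * n * m := by gcongr
  refine Nat.ceil_mono ?_
  linarith [show 0 ≤ p * n by positivity]

lemma ceil_mul_ceil_le_of_two_le (hp : p ≤ 3 / 4) (hm : 2 ≤ ⌈p * m / 3⌉₊)
    (hn : 2 ≤ ⌈p * n / 3⌉₊) :
    ⌈p * m / 3⌉₊ * ⌈p * n / 3⌉₊ ≤ ⌈p * (m * n) / 5⌉₊ := by
  obtain ⟨a, ha⟩ := Nat.exists_eq_add_of_le' hm
  obtain ⟨b, hb⟩ := Nat.exists_eq_add_of_le' hn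
  have hpm : ((a + 1 : ℕ) : ℝ) < p * m / 3 := Nat.lt_ceil.mp (by omega)
  have hpn : ((b + 1 : ℕ) : ℝ) < p * n / 3 := Nat.lt_ceil.mp (by omega)
  have hm_ge : 4 * a + 5 ≤ m := by
    have h : p * m ≤ 3 / 4 * m := by gcongr
    have : ((4 * (a + 1) : ℕ) : ℝ) < m := by
      push_cast at hpm ⊢
      linarith
    exact Nat.cast_lt.mp this
  have hm_ge' : 4 * a + 5 ≤ (m : ℝ) := mod_cast hm_ge
  push_cast at hpn
  rw [ha, hb, show (a + 2) * (b + 2) = a * b + 2 * a + 2 * b + 3 + 1 by ring, Nat.succ_le_iff,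
    Nat.lt_ceil]
  calc ((a * b + 2 * a + 2 * b + 3 : ℕ) : ℝ) ≤ (4 * a + 5) * (3 * (b + 1)) / 5 := by
        push_cast
        linarith [show (0 : ℝ) ≤ 7 * (a * b) + 2 * a + 5 * b by positivity]
    _ ≤ m * (3 * (b + 1)) / 5 := by gcongr
    _ < m * (p * n) / 5 := by
        have hm_pos : (0 : ℝ) < m := hm_ge'.trans_lt' (by positivity)
        have hpn' : 3 * (b + 1) < p * n := (lt_div_iff₀' (by norm_num)).mp hpn
        exact div_lt_div_of_pos_right (mul_lt_mul_of_pos_left hpn' hm_pos) (by norm_num)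
    _ = p * (m * n) / 5 := by ring

lemma ceil_mul_ceil_le (hp : p ≤ 3 / 4) (hm : 2 ≤ m) (hn : 2 ≤ n) :
    ⌈p * m / 3⌉₊ * ⌈p * n / 3⌉₊ ≤ ⌈p * (m * n) / 5⌉₊ := by
  obtain hp0 | hp0 := le_total p 0
  · have h : p * m / 3 ≤ 0 := by
      linarith [mul_nonpos_of_nonpos_of_nonneg hp0 (Nat.cast_nonneg (α := ℝ) m)]
    simp [Nat.ceil_eq_zero.mpr h]
  obtain ha | ha := le_or_gt 2 ⌈p * m / 3⌉₊
  · obtain hb | hb := le_or_gt 2 ⌈p * n / 3⌉₊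
    · exact ceil_mul_ceil_le_of_two_le hp ha hb
    · rw [mul_comm (m : ℝ)]
      exact (mul_le_of_le_one_right' (Nat.le_of_lt_succ hb)).trans
        (ceil_div_three_le_ceil_mul_div_five hp0 hn)
  · exact (mul_le_of_le_one_left' (Nat.le_of_lt_succ ha)).trans
      (ceil_div_three_le_ceil_mul_div_five hp0 hm)

end Ceil

theorem stmt0_general {p : ℝ} (hp : p ≤ 3 / 4) {m n : ℕ} (hm : 2 ≤ m) (hn : 2 ≤ n) :
    pDomNum (pathGraph m) p * pDomNum (pathGraph n) p ≤
      pDomNum (pathGraph m □ pathGraph n) p := by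
  classical
  have hp1 : p ≤ 1 := hp.trans (by norm_num)
  calc pDomNum (pathGraph m) p * pDomNum (pathGraph n) p
      ≤ ⌈p * m / 3⌉₊ * ⌈p * n / 3⌉₊ :=
        Nat.mul_le_mul (pDomNum_pathGraph_le hp1 m) (pDomNum_pathGraph_le hp1 n)
    _ ≤ ⌈p * (m * n) / 5⌉₊ := ceil_mul_ceil_le hp hm hn
    _ = ⌈p * Fintype.card (Fin m × Fin n) / ((4 : ℕ) + 1)⌉₊ := by
        rw [Fintype.card_prod, Fintype.card_fin, Fintype.card_fin]
        norm_num
    _ ≤ pDomNum (pathGraph m □ pathGraph n) p :=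
        ceil_mul_card_div_le_pDomNum (fun v ↦ degree_pathGraph_boxProd_pathGraph_le_four v) hp1

theorem stmt0 (m n : ℕ) (hm : 2 ≤ m) (hmn : m ≤ n) :
    pDomNum (pathGraph m) (1/2) * pDomNum (pathGraph n) (1/2) ≤
      pDomNum (pathGraph m □ pathGraph n) (1/2) :=
  stmt0_general (by norm_num) hm (hm.trans hmn)
end

section
/- For all integers m, n ≥ 1, the 1/2-domination number of the Cartesian product of complete graphs satisfies γ_{1/2}(K_m □ K_n) = ⌈(m + n − √(m² + n²))/2⌉. -/
open SimpleGraph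

/-- `S` is a `γ_p`-set: a `p`-dominating set of minimum cardinality `γ_p(G)`. -/
def IsGammaPSet {V : Type*} [Fintype V] (G : SimpleGraph V) (p : ℝ) (S : Set V) : Prop :=
  IsPDomSet G p S ∧ S.ncard = pDomNum G p

/-- `v` belongs to the `p`-influencing set of `G`, i.e. the union of all `γ_p`-sets. -/
def InInfluence {V : Type*} [Fintype V] (G : SimpleGraph V) (p : ℝ) (v : V) : Prop :=
  ∃ S : Set V, IsGammaPSet G p S ∧ v ∈ S

/-!
The vertices of `K_m □ K_n` outside `N[S]` are the cells of the grid of rows and columns that `S`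
misses. If `S` has `k` elements, this grid has at least `(m - k) * (n - k)` cells as long as
`k ≤ m` and `k ≤ n`, and exactly that many when `S` is a partial transversal. Hence such a `k` is
the size of a `p`-dominating set iff `(m - k) * (n - k) ≤ (1 - p) * m * n`, that is, iff `k` is at
least the smaller root of the corresponding quadratic. That root is at most `min m n`, so sizes
beyond `m` or `n` never matter. For `p = 1/2` the discriminant `(m - n)² + 4 * (1 - p) * m * n` is
`m² + n²`.
-/

section LowerRoot

variable {a b c k : ℝ}

/-- The smaller root of the quadratic equation `(a - x) * (b - x) = c`; it is the threshold for the
size of a `p`-dominating set of `K_a □ K_b` when `c = (1 - p) * (a * b)`. -/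
noncomputable def lowerRoot (a b c : ℝ) : ℝ :=
  (a + b - √((a - b) ^ 2 + 4 * c)) / 2

lemma lowerRoot_nonneg (hab : 0 ≤ a + b) (hc : c ≤ a * b) : 0 ≤ lowerRoot a b c := by
  have hsqrt : √((a - b) ^ 2 + 4 * c) ≤ a + b := (Real.sqrt_le_left hab).2 (by linarith)
  unfold lowerRoot
  linarith

lemma lowerRoot_le_min (hc : 0 ≤ c) : lowerRoot a b c ≤ min a b := by
  have hsqrt : |a - b| ≤ √((a - b) ^ 2 + 4 * c) := Real.abs_le_sqrt (by linarith)
  obtain ⟨hlower, hupper⟩ := abs_le.1 hsqrt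
  unfold lowerRoot
  exact le_min (by linarith) (by linarith)

lemma lowerRoot_le_iff (hc : 0 ≤ c) (hk : 2 * k ≤ a + b) :
    lowerRoot a b c ≤ k ↔ (a - k) * (b - k) ≤ c := by
  calc lowerRoot a b c ≤ k
      ↔ a + b - 2 * k ≤ √((a - b) ^ 2 + 4 * c) := by
        unfold lowerRoot
        constructor <;> intro h <;> linarith
    _ ↔ (a + b - 2 * k) ^ 2 ≤ (a - b) ^ 2 + 4 * c :=
        Real.le_sqrt (sub_nonneg.2 hk) (by positivity)
    _ ↔ (a - k) * (b - k) ≤ c := by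
        constructor <;> intro h <;> linarith

end LowerRoot

lemma cast_ncard_compl {V : Type*} [Fintype V] (S : Set V) :
    (Sᶜ.ncard : ℝ) = Fintype.card V - S.ncard := by
  rw [eq_sub_iff_add_eq', ← Nat.card_eq_fintype_card]
  exact_mod_cast Set.ncard_add_ncard_compl S

lemma isPDomSet_iff_ncard_compl_le {V : Type*} [Fintype V] {G : SimpleGraph V} {p : ℝ}
    {S : Set V} :
    IsPDomSet G p S ↔ ((closedNbhd G S)ᶜ.ncard : ℝ) ≤ (1 - p) * Fintype.card V := by
  rw [IsPDomSet, cast_ncard_compl]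
  constructor <;> intro h <;> linarith

lemma mem_closedNbhd_boxProd_top_iff {α β : Type*} {S : Set (α × β)} {w : α × β} :
    w ∈ closedNbhd ((⊤ : SimpleGraph α) □ (⊤ : SimpleGraph β)) S ↔
      w.1 ∈ Prod.fst '' S ∨ w.2 ∈ Prod.snd '' S := by
  simp only [closedNbhd, Set.mem_ofPred_eq, Set.mem_image, boxProd_adj, top_adj]
  grind

lemma compl_closedNbhd_boxProd_top {α β : Type*} (S : Set (α × β)) :
    (closedNbhd ((⊤ : SimpleGraph α) □ (⊤ : SimpleGraph β)) S)ᶜ =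
      (Prod.fst '' S)ᶜ ×ˢ (Prod.snd '' S)ᶜ := by
  ext w
  rw [Set.mem_compl_iff, mem_closedNbhd_boxProd_top_iff, not_or]
  rfl

section BoxProdTop

variable {α β : Type*} [Fintype α] [Fintype β] {p : ℝ} {k : ℕ}

lemma isPDomSet_boxProd_top_iff {S : Set (α × β)} :
    IsPDomSet ((⊤ : SimpleGraph α) □ (⊤ : SimpleGraph β)) p S ↔
      ((Fintype.card α : ℝ) - (Prod.fst '' S).ncard) *
          ((Fintype.card β : ℝ) - (Prod.snd '' S).ncard) ≤
        (1 - p) * (Fintype.card α * Fintype.card β) := by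
  rw [isPDomSet_iff_ncard_compl_le, compl_closedNbhd_boxProd_top, Set.ncard_prod, Nat.cast_mul,
    cast_ncard_compl, cast_ncard_compl, Fintype.card_prod, Nat.cast_mul]

lemma exists_partialTransversal (hα : k ≤ Fintype.card α) (hβ : k ≤ Fintype.card β) :
    ∃ S : Set (α × β), S.ncard = k ∧ (Prod.fst '' S).ncard = k ∧ (Prod.snd '' S).ncard = k := by
  obtain ⟨f⟩ : Nonempty (Fin k ↪ α) := Function.Embedding.nonempty_of_card_le (by simpa)
  obtain ⟨g⟩ : Nonempty (Fin k ↪ β) := Function.Embedding.nonempty_of_card_le (by simpa)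
  have hfg : Function.Injective fun i => (f i, g i) := fun i j h => f.injective (Prod.ext_iff.1 h).1
  refine ⟨Set.range fun i => (f i, g i), ?_, ?_, ?_⟩
  · rw [Set.ncard_range_of_injective hfg, Nat.card_fin]
  · rw [← Set.range_comp]
    exact (Set.ncard_range_of_injective f.injective).trans (Nat.card_fin k)
  · rw [← Set.range_comp]
    exact (Set.ncard_range_of_injective g.injective).trans (Nat.card_fin k)

lemma exists_isPDomSet_boxProd_top (hp : p ≤ 1) (hα : k ≤ Fintype.card α)
    (hβ : k ≤ Fintype.card β)
    (hk : lowerRoot (Fintype.card α) (Fintype.card β)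
      ((1 - p) * (Fintype.card α * Fintype.card β)) ≤ k) :
    ∃ S : Set (α × β), IsPDomSet ((⊤ : SimpleGraph α) □ (⊤ : SimpleGraph β)) p S ∧
      S.ncard = k := by
  obtain ⟨S, hS, hfst, hsnd⟩ := exists_partialTransversal hα hβ
  refine ⟨S, ?_, hS⟩
  have hk_mid : 2 * (k : ℝ) ≤ Fintype.card α + Fintype.card β := by
    norm_cast
    omega
  rw [isPDomSet_boxProd_top_iff, hfst, hsnd]
  exact (lowerRoot_le_iff (mul_nonneg (sub_nonneg.2 hp) (by positivity)) hk_mid).1 hk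

lemma IsPDomSet.lowerRoot_le_ncard (hp : p ≤ 1) {S : Set (α × β)}
    (hS : IsPDomSet ((⊤ : SimpleGraph α) □ (⊤ : SimpleGraph β)) p S) :
    lowerRoot (Fintype.card α) (Fintype.card β)
      ((1 - p) * (Fintype.card α * Fintype.card β)) ≤ S.ncard := by
  have hc : 0 ≤ (1 - p) * ((Fintype.card α : ℝ) * Fintype.card β) :=
    mul_nonneg (sub_nonneg.2 hp) (by positivity)
  by_contra! hlt
  obtain ⟨hα, hβ⟩ := lt_min_iff.1 (hlt.trans_le (lowerRoot_le_min hc))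
  have hfst : ((Prod.fst '' S).ncard : ℝ) ≤ S.ncard := by exact_mod_cast Set.ncard_image_le
  have hsnd : ((Prod.snd '' S).ncard : ℝ) ≤ S.ncard := by exact_mod_cast Set.ncard_image_le
  refine hlt.not_ge ((lowerRoot_le_iff hc (by linarith)).2 ?_)
  calc ((Fintype.card α : ℝ) - S.ncard) * (Fintype.card β - S.ncard)
      ≤ (Fintype.card α - (Prod.fst '' S).ncard) * (Fintype.card β - (Prod.snd '' S).ncard) := by
        gcongr
        linarith
    _ ≤ (1 - p) * (Fintype.card α * Fintype.card β) := isPDomSet_boxProd_top_iff.1 hS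

end BoxProdTop

theorem stmt1_general {α β : Type*} [Fintype α] [Fintype β] {p : ℝ}
    (hp₀ : 0 ≤ p) (hp₁ : p ≤ 1) :
    (pDomNum ((⊤ : SimpleGraph α) □ (⊤ : SimpleGraph β)) p : ℤ) =
      ⌈((Fintype.card α : ℝ) + Fintype.card β -
        √(((Fintype.card α : ℝ) - Fintype.card β) ^ 2 +
          4 * ((1 - p) * (Fintype.card α * Fintype.card β)))) / 2⌉ := by
  set r := lowerRoot (Fintype.card α) (Fintype.card β)
    ((1 - p) * (Fintype.card α * Fintype.card β)) with hr
  rw [← lowerRoot, ← hr]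
  have hmul : 0 ≤ (Fintype.card α : ℝ) * Fintype.card β := by positivity
  have hr₀ : 0 ≤ r := lowerRoot_nonneg (by positivity) (mul_le_of_le_one_left hmul (by linarith))
  obtain ⟨hα, hβ⟩ := le_min_iff.1 (lowerRoot_le_min (mul_nonneg (sub_nonneg.2 hp₁) hmul))
  rw [← Int.natCast_ceil_eq_ceil hr₀, Nat.cast_inj]
  refine IsLeast.csInf_eq ⟨?_, ?_⟩
  · exact exists_isPDomSet_boxProd_top hp₁ (Nat.ceil_le.2 hα) (Nat.ceil_le.2 hβ) (Nat.le_ceil r)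
  · rintro _ ⟨S, hS, rfl⟩
    exact Nat.ceil_le.2 (hS.lowerRoot_le_ncard hp₁)

theorem stmt1 (m n : ℕ) (hm : 1 ≤ m) (hn : 1 ≤ n) :
    (pDomNum ((⊤ : SimpleGraph (Fin m)) □ (⊤ : SimpleGraph (Fin n))) (1/2) : ℤ) =
      ⌈((m : ℝ) + (n : ℝ) - Real.sqrt ((m : ℝ)^2 + (n : ℝ)^2)) / 2⌉ := by
  have discrim_half : ((m : ℝ) - n) ^ 2 + 4 * ((1 - 1 / 2) * (m * n)) = m ^ 2 + n ^ 2 := by ring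
  rw [stmt1_general (by norm_num) (by norm_num), Fintype.card_fin, Fintype.card_fin, discrim_half]
end

section
/- Let G be a finite simple graph with at least one vertex, let p ∈ (0,1], and let v be a vertex of maximum degree in G. If v belongs to no γ_p-set of G, then every γ_p-set S of G satisfies |S ∩ N[N[v]]| ≥ 2; that is, S contains at least two vertices at distance at most 2 from v. -/
/-!
An exchange argument. Suppose a `γ_p`-set `S` has at most one vertex in `N[N[v]]`. Since `p > 0`,
`S` is nonempty, so there is `u ∈ S` with `S ∩ N[N[v]] ⊆ {u}`. Then `N[v]` is disjoint from
`N[S \ {u}]`, and `|N[u]| ≤ |N[v]|` because `v` has maximum degree; hence replacing `u` by `v` in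
`S` does not shrink the closed neighborhood:
`|N[S]| ≤ |N[u]| + |N[S \ {u}]| ≤ |N[v]| + |N[S \ {u}]| = |N[insert v (S \ {u})]|`.
As `v ∉ S`, the exchange preserves the cardinality and yields a `γ_p`-set containing `v`.
-/

open SimpleGraph

section ClosedNbhd

variable {V : Type*} (G : SimpleGraph V)

lemma closedNbhd_empty : closedNbhd G ∅ = ∅ := by
  simp [closedNbhd]

lemma closedNbhd_singleton (v : V) : closedNbhd G {v} = insert v (G.neighborSet v) := by
  ext w
  simp [closedNbhd]

lemma closedNbhd_insert (v : V) (S : Set V) :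
    closedNbhd G (insert v S) = closedNbhd G {v} ∪ closedNbhd G S := by
  ext w
  simp [closedNbhd]

lemma closedNbhd_mono {S T : Set V} (h : S ⊆ T) : closedNbhd G S ⊆ closedNbhd G T :=
  fun _ ⟨u, hu, huw⟩ => ⟨u, h hu, huw⟩

lemma disjoint_closedNbhd_left_iff {S T : Set V} :
    Disjoint (closedNbhd G S) T ↔ Disjoint S (closedNbhd G T) := by
  simp only [Set.disjoint_left]
  constructor
  · rintro h u hu ⟨w, hw, huw⟩
    exact h ⟨u, hu, huw.imp Eq.symm Adj.symm⟩ hw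
  · rintro h w ⟨u, hu, huw⟩ hw
    exact h hu ⟨w, hw, huw.imp Eq.symm Adj.symm⟩

lemma encard_closedNbhd_singleton (v : V) :
    (closedNbhd G {v}).encard = (G.neighborSet v).encard + 1 := by
  rw [closedNbhd_singleton, Set.encard_insert_of_notMem G.notMem_neighborSet_self]

lemma encard_closedNbhd_le_insert_sdiff_singleton {S : Set V} {u v : V}
    (hdeg : (G.neighborSet u).encard ≤ (G.neighborSet v).encard)
    (hS : S ∩ closedNbhd G (closedNbhd G {v}) ⊆ {u}) :
    (closedNbhd G S).encard ≤ (closedNbhd G (insert v (S \ {u}))).encard := by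
  have hdisj : Disjoint (closedNbhd G {v}) (closedNbhd G (S \ {u})) := by
    rw [disjoint_comm, disjoint_closedNbhd_left_iff, Set.disjoint_left]
    exact fun w hw hwv => hw.2 (hS ⟨hw.1, hwv⟩)
  have hcover : closedNbhd G S ⊆ closedNbhd G {u} ∪ closedNbhd G (S \ {u}) := by
    rw [← closedNbhd_insert, Set.insert_sdiff_singleton]
    exact closedNbhd_mono G (Set.subset_insert u S)
  calc (closedNbhd G S).encard
    _ ≤ (closedNbhd G {u} ∪ closedNbhd G (S \ {u})).encard := Set.encard_le_encard hcover
    _ ≤ (closedNbhd G {u}).encard + (closedNbhd G (S \ {u})).encard := Set.encard_union_le _ _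
    _ ≤ (closedNbhd G {v}).encard + (closedNbhd G (S \ {u})).encard := by
      simp only [encard_closedNbhd_singleton]
      gcongr
    _ = (closedNbhd G (insert v (S \ {u}))).encard := by
      rw [closedNbhd_insert, Set.encard_union_eq hdisj]

end ClosedNbhd

lemma exists_mem_inter_subset_singleton {α : Type*} {s t : Set α} (hs : s.Nonempty)
    (hst : (s ∩ t).Subsingleton) : ∃ a ∈ s, s ∩ t ⊆ {a} := by
  obtain hempty | ⟨a, ha⟩ := (s ∩ t).eq_empty_or_nonempty
  · obtain ⟨a, ha⟩ := hs
    exact ⟨a, ha, hempty ▸ Set.empty_subset _⟩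
  · exact ⟨a, ha.1, fun b hb => hst hb ha⟩

section Domination

variable {V : Type*} [Fintype V] {G : SimpleGraph V} {p : ℝ} {S : Set V}

lemma IsPDomSet.nonempty [Nonempty V] (hS : IsPDomSet G p S) (hp : 0 < p) : S.Nonempty := by
  rw [Set.nonempty_iff_ne_empty]
  rintro rfl
  have hpos : 0 < p * (Fintype.card V : ℝ) := mul_pos hp (Nat.cast_pos.2 Fintype.card_pos)
  rw [IsPDomSet, closedNbhd_empty, Set.ncard_empty, Nat.cast_zero] at hS
  exact hS.not_gt hpos

lemma IsGammaPSet.insert_sdiff_singleton {u v : V} (hS : IsGammaPSet G p S) (hu : u ∈ S)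
    (hv : v ∉ S) (hdeg : (G.neighborSet u).ncard ≤ (G.neighborSet v).ncard)
    (hinter : S ∩ closedNbhd G (closedNbhd G {v}) ⊆ {u}) :
    IsGammaPSet G p (insert v (S \ {u})) := by
  have hle : (closedNbhd G S).ncard ≤ (closedNbhd G (insert v (S \ {u}))).ncard := by
    rw [← Nat.cast_le (α := ℕ∞), Set.coe_ncard_eq_encard, Set.coe_ncard_eq_encard] at hdeg ⊢
    exact encard_closedNbhd_le_insert_sdiff_singleton G hdeg hinter
  exact ⟨hS.1.trans (Nat.cast_le.2 hle), (Set.ncard_exchange hv hu).trans hS.2⟩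

end Domination

theorem stmt8 {V : Type*} [Fintype V] [Nonempty V] (G : SimpleGraph V)
    (p : ℝ) (hp0 : 0 < p) (hp1 : p ≤ 1) (v : V)
    (hv : ∀ u : V, (G.neighborSet u).ncard ≤ (G.neighborSet v).ncard)
    (hnot : ∀ S : Set V, IsGammaPSet G p S → v ∉ S) :
    ∀ S : Set V, IsGammaPSet G p S →
      2 ≤ (S ∩ closedNbhd G (closedNbhd G {v})).ncard := by
  intro S hS
  by_contra! hlt
  have hsub : (S ∩ closedNbhd G (closedNbhd G {v})).Subsingleton :=
    Set.ncard_le_one_iff_subsingleton.1 (Nat.le_of_lt_succ hlt)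
  obtain ⟨u, huS, hu⟩ := exists_mem_inter_subset_singleton (hS.1.nonempty hp0) hsub
  exact hnot _ (hS.insert_sdiff_singleton huS (hnot S hS) (hv u) hu) (Set.mem_insert v _)
end
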